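/- arXiv:2110.10989 — 2 statements merged into one kernel-verified Lean document; each statement's English description precedes it below -/
import Mathlib

section
/- Let a₁₁, a₁₂, a₂₁, a₂₂ be nonnegative real numbers, and set ŝ₁ = a₁₁ + a₁₂, s₁* = a₁₁ + a₂₁, s₂* = a₁₂ + a₂₂ and n = ŝ₁ + a₂₁ + a₂₂. Assume ŝ₁ > 0, n > 0, s₂* ≥ s₁*, and s₂*/n ≥ a₁₂/ŝ₁. Then (a₁₁·a₁₂·s₂*)/(ŝ₁·n) − (a₁₂²·s₁*)/(ŝ₁·n) + (a₁₂·s₁*·s₂*)/n² + (a₂₁·s₂*²)/n² ≥ (a₁₁·a₁₂)/(2ŝ₁) + a₂₁/4. -/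
/-- **Step 4 of the proof of Theorem 1 (display (eq-new-proof-12121)).**
Let `a₁₁, a₁₂, a₂₁, a₂₂ ≥ 0`, `ŝ₁ = a₁₁ + a₁₂`, `s₁* = a₁₁ + a₂₁`, `s₂* = a₁₂ + a₂₂`,
`n = ŝ₁ + a₂₁ + a₂₂`. If `ŝ₁ > 0`, `n > 0`, `s₂* ≥ s₁*` and `s₂*/n ≥ a₁₂/ŝ₁`, then
`a₁₁a₁₂s₂*/(ŝ₁n) − a₁₂²s₁*/(ŝ₁n) + a₁₂s₁*s₂*/n² + a₂₁s₂*²/n²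
  ≥ a₁₁a₁₂/(2ŝ₁) + a₂₁/4`. -/
theorem step4_inner_product_lower_bound (a₁₁ a₁₂ a₂₁ a₂₂ : ℝ)
    (h₁₁ : 0 ≤ a₁₁) (h₁₂ : 0 ≤ a₁₂) (h₂₁ : 0 ≤ a₂₁) (h₂₂ : 0 ≤ a₂₂)
    (hshat : 0 < a₁₁ + a₁₂) (hn : 0 < a₁₁ + a₁₂ + a₂₁ + a₂₂)
    (hbal : a₁₁ + a₂₁ ≤ a₁₂ + a₂₂)
    (hratio : a₁₂ / (a₁₁ + a₁₂) ≤ (a₁₂ + a₂₂) / (a₁₁ + a₁₂ + a₂₁ + a₂₂)) :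
    a₁₁ * a₁₂ / (2 * (a₁₁ + a₁₂)) + a₂₁ / 4 ≤
      a₁₁ * a₁₂ * (a₁₂ + a₂₂) / ((a₁₁ + a₁₂) * (a₁₁ + a₁₂ + a₂₁ + a₂₂))
        - a₁₂ ^ 2 * (a₁₁ + a₂₁) / ((a₁₁ + a₁₂) * (a₁₁ + a₁₂ + a₂₁ + a₂₂))
        + a₁₂ * (a₁₁ + a₂₁) * (a₁₂ + a₂₂) / (a₁₁ + a₁₂ + a₂₁ + a₂₂) ^ 2
        + a₂₁ * (a₁₂ + a₂₂) ^ 2 / (a₁₁ + a₁₂ + a₂₁ + a₂₂) ^ 2 := by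
  -- With `p = s₂*/n` and `q = a₁₂/ŝ₁`, the right-hand side is
  -- `a₁₁qp + a₁₂(1-p)(p-q) + a₂₁p²`, where `1/2 ≤ p ≤ 1` and `q ≤ p`.
  obtain ⟨p, hp⟩ : ∃ p, p = (a₁₂ + a₂₂) / (a₁₁ + a₁₂ + a₂₁ + a₂₂) := ⟨_, rfl⟩
  obtain ⟨q, hq⟩ : ∃ q, q = a₁₂ / (a₁₁ + a₁₂) := ⟨_, rfl⟩
  have hlhs : a₁₁ * a₁₂ / (2 * (a₁₁ + a₁₂)) + a₂₁ / 4 = a₁₁ * q / 2 + a₂₁ / 4 := by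
    rw [hq]; field_simp
  have hrhs : a₁₁ * a₁₂ * (a₁₂ + a₂₂) / ((a₁₁ + a₁₂) * (a₁₁ + a₁₂ + a₂₁ + a₂₂))
        - a₁₂ ^ 2 * (a₁₁ + a₂₁) / ((a₁₁ + a₁₂) * (a₁₁ + a₁₂ + a₂₁ + a₂₂))
        + a₁₂ * (a₁₁ + a₂₁) * (a₁₂ + a₂₂) / (a₁₁ + a₁₂ + a₂₁ + a₂₂) ^ 2
        + a₂₁ * (a₁₂ + a₂₂) ^ 2 / (a₁₁ + a₁₂ + a₂₁ + a₂₂) ^ 2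
      = a₁₁ * q * p + a₁₂ * (1 - p) * (p - q) + a₂₁ * p ^ 2 := by
    rw [hq, hp]; field_simp; ring
  have hp_half : 1 / 2 ≤ p := by
    rw [hp, le_div_iff₀ hn]; linarith
  have hp_one : p ≤ 1 := by
    rw [hp, div_le_one hn]; linarith
  have hq_nonneg : 0 ≤ q := by rw [hq]; positivity
  have hqp : q ≤ p := by rw [hq, hp]; exact hratio
  rw [hlhs, hrhs]
  have t₁ : a₁₁ * q * (1 / 2) ≤ a₁₁ * q * p := by gcongr
  have t₂ : 0 ≤ a₁₂ * (1 - p) * (p - q) :=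
    mul_nonneg (mul_nonneg h₁₂ (by linarith)) (by linarith)
  have t₃ : a₂₁ * (1 / 2) ^ 2 ≤ a₂₁ * p ^ 2 := by gcongr
  linarith
end

section
/- Let σ > 0, let u₁,…,u_M ∈ ℝⁿ, let P_{u_l} denote the Gaussian measure on ℝⁿ with mean u_l and covariance σ²Iₙ, let P₀ be the one with mean 0, and let P = M⁻¹ Σ_{l=1}^M P_{u_l} be the uniform mixture. Then χ²(P, P₀) = M⁻² Σ_{l=1}^M Σ_{m=1}^M exp(⟨u_l, u_m⟩/σ²) − 1. In particular, if the u_l are pairwise orthogonal and ‖u_l‖² = s·σ² for every l and some s ≥ 0, then χ²(P, P₀) = M⁻¹(eˢ − 1). -/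
/-!
Each `N(u, v Iₙ)` has the density `D_u(x) = ∏ᵢ exp ((uᵢ / v) xᵢ - uᵢ² / (2v))` with respect to
`P₀ = N(0, v Iₙ)`, where `v = σ²` (`pi_gaussianReal_eq_withDensity`). The mixture therefore has the
average of these densities as its density, and expanding its square reduces the claim to the integrals
`∫ D_u D_w dP₀`. By Fubini such an integral factors over the coordinates, and the one-dimensional
factor is a value of the Gaussian moment generating function:
`E exp (((a + b) / v) X) exp (-(a² + b²) / (2v)) = exp (ab / v)`. This gives
`∫ D_u D_w dP₀ = exp (⟨u, w⟩ / v)` (`integral_gaussRatioPi_mul`).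
In the orthogonal case the diagonal terms equal `eˢ` and the off-diagonal ones equal `1`.
-/

open MeasureTheory ProbabilityTheory
open scoped ENNReal NNReal

noncomputable section

/-- The chi-square divergence `χ²(P,Q) = ∫ (dP/dQ)² dQ − 1`. -/
def chiSq {Ω : Type*} [MeasurableSpace Ω] (P Q : Measure Ω) : ℝ :=
  (∫ x, ((P.rnDeriv Q x).toReal) ^ 2 ∂Q) - 1

/-- The likelihood ratio of `N(a, v)` with respect to `N(0, v)` at `x`, as a real number. -/
def gaussRatio (v : ℝ≥0) (a x : ℝ) : ℝ := Real.exp (a / v * x - a ^ 2 / (2 * v))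

/-- The likelihood ratio of `N(u, v Iₙ)` with respect to `N(0, v Iₙ)` at `x`. -/
def gaussRatioPi {n : ℕ} (v : ℝ≥0) (u x : Fin n → ℝ) : ℝ := ∏ i, gaussRatio v (u i) (x i)

lemma gaussRatio_nonneg (v : ℝ≥0) (a x : ℝ) : 0 ≤ gaussRatio v a x := (Real.exp_pos _).le

lemma gaussRatioPi_nonneg {n : ℕ} (v : ℝ≥0) (u x : Fin n → ℝ) : 0 ≤ gaussRatioPi v u x :=
  Finset.prod_nonneg fun _ _ => gaussRatio_nonneg _ _ _

@[fun_prop]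
lemma measurable_gaussRatio (v : ℝ≥0) (a : ℝ) : Measurable (gaussRatio v a) := by
  unfold gaussRatio; fun_prop

@[fun_prop]
lemma measurable_gaussRatioPi {n : ℕ} (v : ℝ≥0) (u : Fin n → ℝ) :
    Measurable (gaussRatioPi v u) := by
  unfold gaussRatioPi; fun_prop

lemma integrable_gaussRatio (v : ℝ≥0) (a : ℝ) :
    Integrable (gaussRatio v a) (gaussianReal 0 v) := by
  have h := (integrable_exp_mul_gaussianReal (μ := 0) (v := v) (a / v)).mul_const
    (Real.exp (-(a ^ 2 / (2 * v))))
  refine h.congr (ae_of_all _ fun x => ?_)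
  simp only [gaussRatio, ← Real.exp_add, sub_eq_add_neg]

lemma gaussianReal_eq_withDensity {v : ℝ≥0} (hv : v ≠ 0) (a : ℝ) :
    gaussianReal a v =
      (gaussianReal 0 v).withDensity fun x => ENNReal.ofReal (gaussRatio v a x) := by
  have hv' : (v : ℝ) ≠ 0 := by exact_mod_cast hv
  rw [gaussianReal_of_var_ne_zero _ hv, gaussianReal_of_var_ne_zero _ hv,
    ← withDensity_mul _ (measurable_gaussianPDF 0 v) (by fun_prop)]
  congr 1
  ext x
  simp only [Pi.mul_apply, gaussianPDF]
  rw [← ENNReal.ofReal_mul (gaussianPDFReal_nonneg _ _ _)]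
  congr 1
  simp only [gaussianPDFReal, gaussRatio]
  rw [mul_assoc _ (Real.exp _) (Real.exp _), ← Real.exp_add]
  congr 2
  field_simp
  ring

lemma gaussRatio_mul (v : ℝ≥0) (a b x : ℝ) : gaussRatio v a x * gaussRatio v b x =
    Real.exp ((a + b) / v * x) * Real.exp (-((a ^ 2 + b ^ 2) / (2 * v))) := by
  simp only [gaussRatio, ← Real.exp_add]
  congr 1
  ring

lemma integrable_gaussRatio_mul (v : ℝ≥0) (a b : ℝ) :
    Integrable (fun x => gaussRatio v a x * gaussRatio v b x) (gaussianReal 0 v) := by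
  simp only [gaussRatio_mul]
  exact (integrable_exp_mul_gaussianReal _).mul_const _

lemma integral_gaussRatio_mul {v : ℝ≥0} (hv : v ≠ 0) (a b : ℝ) :
    ∫ x, gaussRatio v a x * gaussRatio v b x ∂(gaussianReal 0 v) = Real.exp (a * b / v) := by
  have hv' : (v : ℝ) ≠ 0 := by exact_mod_cast hv
  have h := congrFun (mgf_fun_id_gaussianReal (μ := 0) (v := v)) ((a + b) / v)
  simp only [mgf] at h
  simp only [gaussRatio_mul]
  rw [integral_mul_const, h, ← Real.exp_add]
  congr 1
  field_simp
  ring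

/-- Both measures agree on boxes, where the integral of the product density factors by Fubini. -/
lemma pi_gaussianReal_eq_withDensity {n : ℕ} {v : ℝ≥0} (hv : v ≠ 0) (u : Fin n → ℝ) :
    (Measure.pi fun i => gaussianReal (u i) v) =
      (Measure.pi fun _ : Fin n => gaussianReal 0 v).withDensity
        fun x => ENNReal.ofReal (gaussRatioPi v u x) := by
  refine Measure.pi_eq fun s hs => ?_
  have h1 (i : Fin n) : gaussianReal (u i) v (s i) =
      ENNReal.ofReal (∫ x, gaussRatio v (u i) x ∂((gaussianReal 0 v).restrict (s i))) := by
    rw [gaussianReal_eq_withDensity hv, withDensity_apply _ (hs i),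
      ofReal_integral_eq_lintegral_ofReal (integrable_gaussRatio _ _).restrict
        (ae_of_all _ fun x => gaussRatio_nonneg _ _ _)]
  rw [withDensity_apply _ (MeasurableSet.univ_pi hs), Measure.restrict_pi_pi,
    ← ofReal_integral_eq_lintegral_ofReal _ (ae_of_all _ fun x => gaussRatioPi_nonneg _ _ _)]
  · unfold gaussRatioPi
    rw [integral_fintype_prod_eq_prod, ENNReal.ofReal_prod_of_nonneg]
    · exact Finset.prod_congr rfl fun i _ => (h1 i).symm
    · exact fun i _ => integral_nonneg fun x => gaussRatio_nonneg _ _ _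
  · exact Integrable.fintype_prod fun i => (integrable_gaussRatio _ _).restrict

lemma integrable_gaussRatioPi_mul {n : ℕ} (v : ℝ≥0) (u w : Fin n → ℝ) :
    Integrable (fun x => gaussRatioPi v u x * gaussRatioPi v w x)
      (Measure.pi fun _ : Fin n => gaussianReal 0 v) := by
  simp only [gaussRatioPi, ← Finset.prod_mul_distrib]
  exact Integrable.fintype_prod
    (f := fun i x => gaussRatio v (u i) x * gaussRatio v (w i) x)
    fun i => integrable_gaussRatio_mul _ _ _

lemma integral_gaussRatioPi_mul {n : ℕ} {v : ℝ≥0} (hv : v ≠ 0) (u w : Fin n → ℝ) :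
    ∫ x, gaussRatioPi v u x * gaussRatioPi v w x
      ∂(Measure.pi fun _ : Fin n => gaussianReal 0 v) =
      Real.exp ((∑ i, u i * w i) / v) := by
  simp only [gaussRatioPi, ← Finset.prod_mul_distrib]
  rw [integral_fintype_prod_eq_prod
    (f := fun i x => gaussRatio v (u i) x * gaussRatio v (w i) x)]
  simp only [integral_gaussRatio_mul hv]
  rw [← Real.exp_sum, Finset.sum_div]

lemma mixture_eq_withDensity {n M : ℕ} {v : ℝ≥0} (hv : v ≠ 0) (u : Fin M → Fin n → ℝ) :
    ((M : ℝ≥0∞)⁻¹ • ∑ l : Fin M, Measure.pi fun i => gaussianReal (u l i) v) =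
      (Measure.pi fun _ : Fin n => gaussianReal 0 v).withDensity
        fun x => (M : ℝ≥0∞)⁻¹ * ∑ l, ENNReal.ofReal (gaussRatioPi v (u l) x) := by
  ext s hs
  rw [withDensity_apply _ hs, lintegral_const_mul _ (by fun_prop),
    lintegral_finsetSum _ (by fun_prop)]
  simp only [pi_gaussianReal_eq_withDensity hv (u _), Measure.smul_apply,
    Measure.coe_finsetSum, Finset.sum_apply, withDensity_apply _ hs, smul_eq_mul]

lemma chiSq_mixture {n M : ℕ} {v : ℝ≥0} (hv : v ≠ 0) (u : Fin M → Fin n → ℝ) :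
    chiSq ((M : ℝ≥0∞)⁻¹ • ∑ l : Fin M, Measure.pi fun i => gaussianReal (u l i) v)
        (Measure.pi fun _ : Fin n => gaussianReal 0 v)
      = (M : ℝ)⁻¹ ^ 2 * ∑ l : Fin M, ∑ m : Fin M,
          Real.exp ((∑ i, u l i * u m i) / v) - 1 := by
  rw [chiSq, mixture_eq_withDensity hv]
  congr 1
  have h : ∀ᵐ x ∂(Measure.pi fun _ : Fin n => gaussianReal 0 v),
      ((((Measure.pi fun _ : Fin n => gaussianReal 0 v).withDensity
        fun x => (M : ℝ≥0∞)⁻¹ * ∑ l, ENNReal.ofReal (gaussRatioPi v (u l) x)).rnDeriv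
        (Measure.pi fun _ : Fin n => gaussianReal 0 v) x).toReal) ^ 2 =
      (M : ℝ)⁻¹ ^ 2 * ∑ l, ∑ m, gaussRatioPi v (u l) x * gaussRatioPi v (u m) x := by
    filter_upwards [Measure.rnDeriv_withDensity (Measure.pi fun _ : Fin n => gaussianReal 0 v)
      (f := fun x => (M : ℝ≥0∞)⁻¹ * ∑ l, ENNReal.ofReal (gaussRatioPi v (u l) x))
      (by fun_prop)] with x hx
    rw [hx, ENNReal.toReal_mul, ENNReal.toReal_sum (by simp)]
    simp only [ENNReal.toReal_ofReal (gaussRatioPi_nonneg _ _ _), ENNReal.toReal_inv,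
      ENNReal.toReal_natCast]
    rw [mul_pow, sq (∑ l, gaussRatioPi v (u l) x), Finset.sum_mul_sum]
  rw [integral_congr_ae h, integral_const_mul, integral_finsetSum _ fun l _ =>
    integrable_finsetSum _ fun m _ => integrable_gaussRatioPi_mul _ _ _]
  congr 1
  refine Finset.sum_congr rfl fun l _ => ?_
  rw [integral_finsetSum _ fun m _ => integrable_gaussRatioPi_mul _ _ _]
  simp only [integral_gaussRatioPi_mul hv]

/-- **χ² divergence of a Gaussian mixture (proofs of Propositions 1 and 2).**
Let `P = M⁻¹ Σ_l P_{u_l}` be the uniform mixture of the Gaussian measures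
`N(u_l, σ²Iₙ)`, `l = 1,…,M`, and `P₀ = N(0, σ²Iₙ)`. Then
`χ²(P,P₀) = M⁻² Σ_{l,m} exp(⟨u_l,u_m⟩/σ²) − 1`; in particular, if the `u_l` are
pairwise orthogonal with `‖u_l‖² = s·σ²` for all `l`, then
`χ²(P,P₀) = M⁻¹(eˢ − 1)`. -/
theorem chiSq_gaussian_mixture (n M : ℕ) (hM : 0 < M) (σ : ℝ) (hσ : 0 < σ)
    (u : Fin M → Fin n → ℝ) :
    (chiSq ((M : ℝ≥0∞)⁻¹ • ∑ l : Fin M,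
          Measure.pi fun i => gaussianReal (u l i) ⟨σ ^ 2, sq_nonneg σ⟩)
        (Measure.pi fun i => gaussianReal 0 ⟨σ ^ 2, sq_nonneg σ⟩)
      = (M : ℝ)⁻¹ ^ 2 * ∑ l : Fin M, ∑ m : Fin M,
          Real.exp ((∑ i, u l i * u m i) / σ ^ 2) - 1) ∧
    (∀ s : ℝ, 0 ≤ s →
      (∀ l m : Fin M, l ≠ m → (∑ i, u l i * u m i) = 0) →
      (∀ l : Fin M, (∑ i, (u l i) ^ 2) = s * σ ^ 2) →
      chiSq ((M : ℝ≥0∞)⁻¹ • ∑ l : Fin M,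
            Measure.pi fun i => gaussianReal (u l i) ⟨σ ^ 2, sq_nonneg σ⟩)
          (Measure.pi fun i => gaussianReal 0 ⟨σ ^ 2, sq_nonneg σ⟩)
        = (M : ℝ)⁻¹ * (Real.exp s - 1)) := by
  have hv : (⟨σ ^ 2, sq_nonneg σ⟩ : ℝ≥0) ≠ 0 := by
    intro h
    exact (pow_pos hσ 2).ne' (congrArg NNReal.toReal h)
  have main : chiSq ((M : ℝ≥0∞)⁻¹ • ∑ l : Fin M,
          Measure.pi fun i => gaussianReal (u l i) ⟨σ ^ 2, sq_nonneg σ⟩)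
        (Measure.pi fun i => gaussianReal 0 ⟨σ ^ 2, sq_nonneg σ⟩)
      = (M : ℝ)⁻¹ ^ 2 * ∑ l : Fin M, ∑ m : Fin M,
          Real.exp ((∑ i, u l i * u m i) / σ ^ 2) - 1 := chiSq_mixture hv u
  refine ⟨main, fun s _ horth hnorm => main.trans ?_⟩
  have hM' : (M : ℝ) ≠ 0 := by exact_mod_cast hM.ne'
  have hσ' : σ ^ 2 ≠ 0 := (pow_pos hσ 2).ne'
  have hterm (l m : Fin M) : Real.exp ((∑ i, u l i * u m i) / σ ^ 2) =
      1 + if l = m then Real.exp s - 1 else 0 := by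
    by_cases hlm : l = m
    · subst hlm
      simp only [← sq, hnorm l, if_true, mul_div_cancel_right₀ _ hσ']
      ring
    · simp [horth l m hlm, hlm]
  simp only [hterm, Finset.sum_add_distrib, Finset.sum_ite_eq, Finset.mem_univ,
    if_true, Finset.sum_const, Finset.card_univ, Fintype.card_fin, nsmul_eq_mul]
  field_simp
  ring
end
end
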